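/- Let R be a commutative ring, n ≥ 3 odd, and g ∈ G_{n-1}(R). Then for every Suslin matrix S ∈ M_{2^{n-1}}(R), l(g·S·g*) = l(g·g*)·l(S). (Here g·g* = g·I·g* is a Suslin matrix since the identity matrix I = S_{n-1}((1,0,…,0),(1,0,…,0)) is a Suslin matrix.) -/

import Mathlib

open Matrix

noncomputable section

/-- Reindexing equivalence `Fin (2 ^ n) ⊕ Fin (2 ^ n) ≃ Fin (2 ^ (n + 1))`. -/
def pow2Equiv (n : ℕ) : Fin (2 ^ n) ⊕ Fin (2 ^ n) ≃ Fin (2 ^ (n + 1)) :=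
  finSumFinEquiv.trans (finCongr (by rw [pow_succ]; ring))

/-- The Suslin matrix `S_n(v, w)` of size `2 ^ n` associated to `v, w : Fin (n+1) → R`. -/
def sus (R : Type) [CommRing R] : (n : ℕ) → (Fin (n + 1) → R) → (Fin (n + 1) → R) →
    Matrix (Fin (2 ^ n)) (Fin (2 ^ n)) R
  | 0, v, _ => v 0 • 1
  | n + 1, v, w =>
      Matrix.reindex (pow2Equiv n) (pow2Equiv n)
        (Matrix.fromBlocks (v 0 • 1) (sus R n (v ∘ Fin.succ) (w ∘ Fin.succ))
          (-(sus R n (w ∘ Fin.succ) (v ∘ Fin.succ))ᵀ) (w 0 • 1))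

/-- The conjugate Suslin matrix `S̄_n(v, w) = S_n(w, v)ᵀ`. -/
def susBar (R : Type) [CommRing R] (n : ℕ) (v w : Fin (n + 1) → R) :
    Matrix (Fin (2 ^ n)) (Fin (2 ^ n)) R :=
  (sus R n w v)ᵀ

/-- Suslin's matrices `J_n`. -/
def Jmat (R : Type) [CommRing R] : (n : ℕ) → Matrix (Fin (2 ^ n)) (Fin (2 ^ n)) R
  | 0 => 1
  | n + 1 =>
      if Even (n + 1) then
        Matrix.reindex (pow2Equiv n) (pow2Equiv n)
          (Matrix.fromBlocks (Jmat R n) 0 0 (-(Jmat R n)))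
      else
        Matrix.reindex (pow2Equiv n) (pow2Equiv n)
          (Matrix.fromBlocks 0 (Jmat R n) (-(Jmat R n)) 0)

/-- The involution `M ↦ M* = J_n · Mᵀ · J_nᵀ`. -/
def invol (R : Type) [CommRing R] (n : ℕ) (M : Matrix (Fin (2 ^ n)) (Fin (2 ^ n)) R) :
    Matrix (Fin (2 ^ n)) (Fin (2 ^ n)) R :=
  Jmat R n * Mᵀ * (Jmat R n)ᵀ

/-- `φ(v, w) = [[0, S_n(v,w)], [S̄_n(v,w), 0]]` (note the shift: vectors in `R^{n+1}`,
matrices of size `2 ^ (n + 1)`). -/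
def phiMat (R : Type) [CommRing R] (n : ℕ) (v w : Fin (n + 1) → R) :
    Matrix (Fin (2 ^ (n + 1))) (Fin (2 ^ (n + 1))) R :=
  Matrix.reindex (pow2Equiv n) (pow2Equiv n)
    (Matrix.fromBlocks 0 (sus R n v w) (susBar R n v w) 0)

/-- The set of Suslin matrices of size `2 ^ m`. -/
def SuslinSet (R : Type) [CommRing R] (m : ℕ) : Set (Matrix (Fin (2 ^ m)) (Fin (2 ^ m)) R) :=
  {S | ∃ v w : Fin (m + 1) → R, S = sus R m v w}

/-- The image of the hyperbolic space `R^{m+1} ⊕ R^{m+1}` inside the Clifford algebra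
`M_{2^{m+1}}(R)`. -/
def PhiSet (R : Type) [CommRing R] (m : ℕ) :
    Set (Matrix (Fin (2 ^ (m + 1))) (Fin (2 ^ (m + 1))) R) :=
  {x | ∃ v w : Fin (m + 1) → R, x = phiMat R m v w}

/-- The block diagonal matrix `diag(g₁, g₂)`. -/
def diagBlock (R : Type) [CommRing R] (m : ℕ)
    (g₁ g₂ : Matrix (Fin (2 ^ m)) (Fin (2 ^ m)) R) :
    Matrix (Fin (2 ^ (m + 1))) (Fin (2 ^ (m + 1))) R :=
  Matrix.reindex (pow2Equiv m) (pow2Equiv m) (Matrix.fromBlocks g₁ 0 0 g₂)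

/-- `Spin_{2(m+1)}(R)`, as the set of pairs `(g₁, g₂)` such that `x = diag(g₁, g₂)`
satisfies `x · x* = 1` and conjugation by `x` maps the image of the hyperbolic space
onto itself. -/
def SpinPair (R : Type) [CommRing R] (m : ℕ) :
    Set (Matrix (Fin (2 ^ m)) (Fin (2 ^ m)) R × Matrix (Fin (2 ^ m)) (Fin (2 ^ m)) R) :=
  {p | IsUnit p.1 ∧ IsUnit p.2 ∧
    diagBlock R m p.1 p.2 * invol R (m + 1) (diagBlock R m p.1 p.2) = 1 ∧
    (fun y => diagBlock R m p.1 p.2 * y * (diagBlock R m p.1 p.2)⁻¹) '' PhiSet R m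
      = PhiSet R m}

/-- The group `G_m(R)` of `g ∈ GL_{2^m}(R)` such that `g · S · g*` is a Suslin matrix
for every Suslin matrix `S`. -/
def GSet (R : Type) [CommRing R] (m : ℕ) : Set (Matrix (Fin (2 ^ m)) (Fin (2 ^ m)) R) :=
  {g | IsUnit g ∧ ∀ S ∈ SuslinSet R m, g * S * invol R m g ∈ SuslinSet R m}

/-- The group `SG_m(R)` of `g ∈ G_m(R)` preserving the length `l(S(v,w)) = v ⬝ᵥ w`. -/
def SGSet (R : Type) [CommRing R] (m : ℕ) : Set (Matrix (Fin (2 ^ m)) (Fin (2 ^ m)) R) :=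
  {g | g ∈ GSet R m ∧ ∀ v w v' w' : Fin (m + 1) → R,
    g * sus R m v w * invol R m g = sus R m v' w' → v' ⬝ᵥ w' = v ⬝ᵥ w}

/-- The hyperbolic quadratic form `q(v, w) = v ⬝ᵥ w` on `R^n ⊕ R^n`. -/
def hypForm (R : Type) [CommRing R] (n : ℕ) :
    QuadraticForm R ((Fin n → R) × (Fin n → R)) :=
  LinearMap.BilinMap.toQuadraticMap
    (LinearMap.mk₂ R (fun x y => x.1 ⬝ᵥ y.2)
      (fun x x' y => by simp [add_dotProduct])
      (fun c x y => by simp [smul_dotProduct])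
      (fun x y y' => by simp [dotProduct_add])
      (fun x c y => by simp [dotProduct_smul]))

/-- `E_i = S_m(e_i, 0)`. -/
def Emat (R : Type) [CommRing R] (m : ℕ) (i : Fin (m + 1)) :
    Matrix (Fin (2 ^ m)) (Fin (2 ^ m)) R :=
  sus R m (Pi.single i 1) 0

/-- `F_i = S_m(0, e_i)`. -/
def Fmat (R : Type) [CommRing R] (m : ℕ) (i : Fin (m + 1)) :
    Matrix (Fin (2 ^ m)) (Fin (2 ^ m)) R :=
  sus R m 0 (Pi.single i 1)

/-!
Write `S = S(v, w)`, let `S̄` be its conjugate and let `l` be the length, so that `S̄ S = l(S)`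
and, from size `2` on, `S + S̄` is the scalar `v 0 + w 0`. Suppose `S ↦ S' = g S h` preserves the
set of Suslin matrices. Cancelling `h` in `S̄' S' = l(S')` and in its polarisation at the identity
shows that the twisted conjugate `h S̄' g` satisfies `(h S̄' g) S = l(S')` and equals
`l(gh) S̄ + d(S)` for a scalar `d(S)` which is additive in `S`. Hence `d(S) S` is a scalar matrix
for every `S`. Looking at an off-diagonal entry that records the coordinate `v 1` gives
`d(S) v 1 = 0`; comparing `S` with its translate by a Suslin matrix having `v 1 = 1` forces
`d = 0`, and then `l(S') = l(gh) l(S)`.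
-/

theorem mul_eq_smul_one_of_isRightRegular {R A : Type*} [Monoid A] [SMul R A]
    [IsScalarTower R A A] [SMulCommClass R A A] {h : A} (hh : IsRightRegular h) {a : A} {r : R}
    (hah : a * h = r • 1) : h * a = r • 1 := by
  apply hh
  calc h * a * h = h * (a * h) := mul_assoc h a h
    _ = r • 1 * h := by rw [hah, mul_smul_comm, smul_mul_assoc, mul_one, one_mul]

section SuslinMatrix

variable {R : Type} [CommRing R]

theorem reindex_fromBlocks_smul_one (n : ℕ) (r : R) :
    reindex (pow2Equiv n) (pow2Equiv n) (fromBlocks (r • 1) 0 0 (r • 1)) =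
      r • (1 : Matrix (Fin (2 ^ (n + 1))) (Fin (2 ^ (n + 1))) R) := by
  have hblocks := fromBlocks_smul r (1 : Matrix (Fin (2 ^ n)) (Fin (2 ^ n)) R) 0 0
    (1 : Matrix (Fin (2 ^ n)) (Fin (2 ^ n)) R)
  simp only [smul_zero, fromBlocks_one] at hblocks
  rw [← hblocks, reindex_apply, submatrix_smul, Pi.smul_apply, Pi.smul_apply, submatrix_one_equiv]

theorem sus_add (n : ℕ) (v w p q : Fin (n + 1) → R) :
    sus R n (v + p) (w + q) = sus R n v w + sus R n p q := by
  induction n with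
  | zero => simp [sus, add_smul]
  | succ n ih =>
    simp only [sus, Pi.add_comp, ih, transpose_add, neg_add, Pi.add_apply, add_smul,
      reindex_apply, ← fromBlocks_add, submatrix_add]

theorem susBar_succ (n : ℕ) (v w : Fin (n + 2) → R) :
    susBar R (n + 1) v w = reindex (pow2Equiv n) (pow2Equiv n)
      (fromBlocks (w 0 • 1) (-sus R n (v ∘ Fin.succ) (w ∘ Fin.succ))
        (susBar R n (v ∘ Fin.succ) (w ∘ Fin.succ)) (v 0 • 1)) := by
  simp [susBar, sus, fromBlocks_transpose]

theorem susBar_add (n : ℕ) (v w p q : Fin (n + 1) → R) :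
    susBar R n (v + p) (w + q) = susBar R n v w + susBar R n p q := by
  rw [susBar, sus_add, transpose_add, susBar, susBar]

theorem sus_add_susBar (n : ℕ) (v w : Fin (n + 2) → R) :
    sus R (n + 1) v w + susBar R (n + 1) v w = (v 0 + w 0) • 1 := by
  rw [susBar_succ, sus, ← susBar, ← reindex_fromBlocks_smul_one]
  simp only [reindex_apply, ← Pi.add_apply, ← submatrix_add]
  rw [fromBlocks_add, add_neg_cancel, neg_add_cancel, add_comm (w 0 • 1), ← add_smul,
    Pi.add_apply]

theorem commute_sus_susBar (n : ℕ) (v w : Fin (n + 1) → R) :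
    Commute (sus R n v w) (susBar R n v w) := by
  cases n with
  | zero => exact (Commute.one_left _).smul_left _
  | succ n =>
    rw [← sub_eq_of_eq_add' (sus_add_susBar n v w).symm]
    exact ((Commute.one_right _).smul_right _).sub_right (Commute.refl _)

theorem susBar_mul_sus (n : ℕ) (v w : Fin (n + 1) → R) :
    susBar R n v w * sus R n v w = (v ⬝ᵥ w) • 1 := by
  induction n with
  | zero => simp [sus, susBar, dotProduct, smul_smul]
  | succ n ih =>
    have hlength : v ⬝ᵥ w = v 0 * w 0 + (v ∘ Fin.succ) ⬝ᵥ (w ∘ Fin.succ) := by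
      simp [dotProduct, Fin.sum_univ_succ]
    have hbar := ih (v ∘ Fin.succ) (w ∘ Fin.succ)
    have hbar' := (commute_sus_susBar n (v ∘ Fin.succ) (w ∘ Fin.succ)).eq.trans hbar
    rw [susBar_succ, sus, ← reindex_fromBlocks_smul_one, hlength]
    simp only [reindex_apply, submatrix_mul_equiv, fromBlocks_multiply]
    rw [← susBar]
    congr 2 <;> simp [hbar, hbar', smul_smul, add_smul, mul_comm (w 0), add_comm]

theorem susBar_mul_sus_add_susBar_mul_sus (n : ℕ) (v w p q : Fin (n + 1) → R) :
    susBar R n v w * sus R n p q + susBar R n p q * sus R n v w =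
      (v ⬝ᵥ q + p ⬝ᵥ w) • 1 := by
  have hsum := susBar_mul_sus n (v + p) (w + q)
  rw [sus_add, susBar_add, add_mul, mul_add, mul_add, susBar_mul_sus, susBar_mul_sus] at hsum
  simp only [add_dotProduct, dotProduct_add, add_smul] at hsum ⊢
  linear_combination (norm := module) hsum

theorem exists_forall_sus_apply_self_eq (n : ℕ) :
    ∃ i, ∀ v w : Fin (n + 1) → R, sus R n v w i i = v 0 := by
  cases n with
  | zero => exact ⟨0, fun v w => by simp [sus]⟩
  | succ n => exact ⟨pow2Equiv n (Sum.inl 0), fun v w => by simp [sus]⟩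

theorem mul_apply_one_eq_zero_of_smul_sus_eq_smul_one {n : ℕ} {v w : Fin (n + 2) → R} {r s : R}
    (hrs : r • sus R (n + 1) v w = s • 1) : r * v 1 = 0 := by
  obtain ⟨i, hi⟩ := exists_forall_sus_apply_self_eq (R := R) n
  simpa [sus, hi] using
    congrFun₂ hrs (pow2Equiv n (Sum.inl i)) (pow2Equiv n (Sum.inr i))

end SuslinMatrix

section Involution

variable (R : Type) [CommRing R]

theorem Jmat_mul_transpose (n : ℕ) : Jmat R n * (Jmat R n)ᵀ = 1 := by
  induction n with
  | zero => simp [Jmat]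
  | succ n ih =>
    rw [Jmat]
    split_ifs <;> simp [fromBlocks_transpose, fromBlocks_multiply, ih]

theorem isUnit_Jmat (n : ℕ) : IsUnit (Jmat R n) :=
  IsUnit.of_mul_eq_one _ (Jmat_mul_transpose R n)

variable {R}

theorem isUnit_invol {n : ℕ} {g : Matrix (Fin (2 ^ n)) (Fin (2 ^ n)) R} (hg : IsUnit g) :
    IsUnit (invol R n g) :=
  ((isUnit_Jmat R n).mul ((isUnit_transpose _).mpr hg)).mul ((isUnit_transpose _).mpr <|
    isUnit_Jmat R n)

end Involution

section TwistedConjugate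

variable {R : Type} [CommRing R] {n : ℕ}

/-- The defect `B(x', y) - l(y) B(x, 1)` of the pairs `x = (v, w)`, `x' = (v', w')` relative to
`y = (u, u')`, where `B` is the polar form of the length, so that `B((v, w), 1) = v 0 + w 0`. It
measures how far `x ↦ x'` is from scaling `B(·, 1)` by `l(y)`, when `1` is sent to `y`. -/
def polarDefect (u u' v w v' w' : Fin (n + 1) → R) : R :=
  u ⬝ᵥ w' + v' ⬝ᵥ u' - (u ⬝ᵥ u') * (v 0 + w 0)

theorem polarDefect_add (u u' v w v' w' p q p' q' : Fin (n + 1) → R) :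
    polarDefect u u' (v + p) (w + q) (v' + p') (w' + q') =
      polarDefect u u' v w v' w' + polarDefect u u' p q p' q' := by
  simp only [polarDefect, add_dotProduct, dotProduct_add, Pi.add_apply]
  ring

variable {g h : Matrix (Fin (2 ^ (n + 1))) (Fin (2 ^ (n + 1))) R} {u u' : Fin (n + 2) → R}

theorem mul_susBar_mul (hh : IsRightRegular h) (hI : g * h = sus R (n + 1) u u')
    {v w v' w' : Fin (n + 2) → R} (hS : g * sus R (n + 1) v w * h = sus R (n + 1) v' w') :
    h * susBar R (n + 1) v' w' * g =
      polarDefect u u' v w v' w' • 1 + (u ⬝ᵥ u') • susBar R (n + 1) v w := by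
  have hone : h * (susBar R (n + 1) u u' * g) = (u ⬝ᵥ u') • 1 := by
    apply mul_eq_smul_one_of_isRightRegular hh
    rw [mul_assoc, hI, susBar_mul_sus]
  have hpolar : h * (susBar R (n + 1) u u' * g * sus R (n + 1) v w + susBar R (n + 1) v' w' * g) =
      (u ⬝ᵥ w' + v' ⬝ᵥ u') • 1 := by
    apply mul_eq_smul_one_of_isRightRegular hh
    rw [add_mul, mul_assoc _ g h, hI, mul_assoc _ g, mul_assoc, hS,
      susBar_mul_sus_add_susBar_mul_sus]
  rw [mul_add, ← mul_assoc, hone, smul_mul_assoc, one_mul, ← mul_assoc] at hpolar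
  rw [polarDefect, sub_smul, mul_smul, ← sus_add_susBar n v w, ← hpolar, smul_add]
  abel

theorem polarDefect_smul_sus (hh : IsRightRegular h) (hI : g * h = sus R (n + 1) u u')
    {v w v' w' : Fin (n + 2) → R} (hS : g * sus R (n + 1) v w * h = sus R (n + 1) v' w') :
    polarDefect u u' v w v' w' • sus R (n + 1) v w =
      (v' ⬝ᵥ w' - (u ⬝ᵥ u') * (v ⬝ᵥ w)) • 1 := by
  have hlength : h * (susBar R (n + 1) v' w' * g * sus R (n + 1) v w) = (v' ⬝ᵥ w') • 1 := by
    apply mul_eq_smul_one_of_isRightRegular hh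
    rw [mul_assoc _ g, mul_assoc, hS, susBar_mul_sus]
  rw [← mul_assoc, ← mul_assoc, mul_susBar_mul hh hI hS, add_mul, smul_mul_assoc, one_mul,
    smul_mul_assoc, susBar_mul_sus, smul_smul] at hlength
  rw [sub_smul, ← hlength, add_sub_cancel_right]

theorem polarDefect_eq_zero (hh : IsRightRegular h)
    (hgh : ∀ S ∈ SuslinSet R (n + 1), g * S * h ∈ SuslinSet R (n + 1))
    (hI : g * h = sus R (n + 1) u u') {v w v' w' : Fin (n + 2) → R}
    (hS : g * sus R (n + 1) v w * h = sus R (n + 1) v' w') :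
    polarDefect u u' v w v' w' = 0 := by
  have mul_apply_one {v w v' w' : Fin (n + 2) → R}
      (hS : g * sus R (n + 1) v w * h = sus R (n + 1) v' w') :
      polarDefect u u' v w v' w' * v 1 = 0 :=
    mul_apply_one_eq_zero_of_smul_sus_eq_smul_one (polarDefect_smul_sus hh hI hS)
  let e : Fin (n + 2) → R := Pi.single 1 1
  have he : e 1 = 1 := Pi.single_eq_same 1 1
  obtain ⟨p, q, hE⟩ := hgh _ ⟨e, 0, rfl⟩
  have hE_zero : polarDefect u u' e 0 p q = 0 := by simpa [he] using mul_apply_one hE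
  have hSE : g * sus R (n + 1) (v + e) (w + 0) * h = sus R (n + 1) (v' + p) (w' + q) := by
    rw [sus_add, sus_add, mul_add, add_mul, hS, hE]
  have htranslate := mul_apply_one hSE
  rwa [polarDefect_add, hE_zero, add_zero, Pi.add_apply, he, mul_add, mul_apply_one hS, zero_add,
    mul_one] at htranslate

end TwistedConjugate

theorem length_multiplicative_general {R : Type} [CommRing R] {n : ℕ}
    {g h : Matrix (Fin (2 ^ (n + 1))) (Fin (2 ^ (n + 1))) R} (hh : IsRightRegular h)
    (hgh : ∀ S ∈ SuslinSet R (n + 1), g * S * h ∈ SuslinSet R (n + 1))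
    {v w v' w' u u' : Fin (n + 2) → R}
    (hS : g * sus R (n + 1) v w * h = sus R (n + 1) v' w')
    (hI : g * h = sus R (n + 1) u u') :
    v' ⬝ᵥ w' = (u ⬝ᵥ u') * (v ⬝ᵥ w) := by
  have hscalar := polarDefect_smul_sus hh hI hS
  rw [polarDefect_eq_zero hh hgh hI hS, zero_smul] at hscalar
  exact sub_eq_zero.mp (by simpa using congrFun₂ hscalar.symm 0 0)

/-- for odd `n ≥ 3` (here `n = m + 1`) and `g ∈ G_{n-1}(R)`, one has
`l(g·S·g*) = l(g·g*)·l(S)` for every Suslin matrix `S`. -/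
theorem length_multiplicative (R : Type) [CommRing R] (m : ℕ) (hm : 2 ≤ m)
    (hodd : Odd (m + 1)) (g : Matrix (Fin (2 ^ m)) (Fin (2 ^ m)) R) (hg : g ∈ GSet R m)
    (v w v' w' u u' : Fin (m + 1) → R)
    (hS : g * sus R m v w * invol R m g = sus R m v' w')
    (hI : g * invol R m g = sus R m u u') :
    v' ⬝ᵥ w' = (u ⬝ᵥ u') * (v ⬝ᵥ w) := by
  obtain ⟨n, rfl⟩ := Nat.exists_eq_add_of_le' (one_le_two.trans hm)
  exact length_multiplicative_general (isUnit_invol hg.1).isRegular.right hg.2 hS hI
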